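/- Let K be a field, R = K[x,y], and I = (x^6, y^6, x y^5, x^5 y, x^4 y^4) ⊂ R. Then (I^2 : I) = I, (I^3 : I) ≠ I^2, (I^4 : I) ≠ I^3, and (I^5 : I) = I^4; in particular I has the phenomenon of fluctuation in colon powers. -/

import Mathlib

open MvPolynomial

/-- `I` has the phenomenon of fluctuation in colon powers. -/
def HasFluctuationInColonPowers {R : Type*} [CommRing R] (I : Ideal R) : Prop :=
  ∃ a b c : ℕ, 0 < a ∧ a < b ∧ b < c ∧
    (((I ^ a).colon I = I ^ (a - 1) ∧ (I ^ b).colon I ≠ I ^ (b - 1) ∧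
        (I ^ c).colon I = I ^ (c - 1)) ∨
      ((I ^ a).colon I ≠ I ^ (a - 1) ∧ (I ^ b).colon I = I ^ (b - 1) ∧
        (I ^ c).colon I ≠ I ^ (c - 1)))

/-!
On exponents, multiplying monomial ideals adds sets of generators, and membership of a monomial in a
colon ideal is a condition on its translates. Let `J = (x^6, x^5y, xy^5, y^6)`, so that
`I = J + (x^4y^4)`. Then `I^2 = J^2`, hence `I^n = J^n` for all `n ≥ 2`, and `J^n` is generated by
the `x^i y^(6n-i)` with `i` in the `n`-fold sumset of `{0, 1, 5, 6}`.

* For `n = 2, 3` the sumset has gaps: `4` is missing from the twofold and `9` from the threefold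
  one, so `x^4y^9` is not in `I^2` and `x^9y^9` is not in `I^3`. They do lie in `I^3 : I` and
  `I^4 : I`.
* For `n ≥ 4` there are no gaps, so `I^n = (x, y)^(6n)`, and counting degrees gives
  `I^(n+1) : I = I^n`.
* A monomial whose products with `x^6` and `y^6` both lie in `J^2` lies in `I`, so `I^2 : I = I`.
-/

open Finset.HasAntidiagonal (antidiagonal mem_antidiagonal)
open scoped Pointwise

theorem pow_eq_pow_of_sq_eq_sq {M : Type*} [CommMonoid M] [PartialOrder M] [MulLeftMono M]
    {a b : M} (hab : a ≤ b) (hsq : b ^ 2 = a ^ 2) {n : ℕ} (hn : 2 ≤ n) : b ^ n = a ^ n := by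
  have hmul : a * b = a ^ 2 := le_antisymm
    (by simpa only [← hsq, sq] using mul_le_mul_left hab b)
    (by simpa only [sq] using mul_le_mul_right hab a)
  induction n, hn using Nat.le_induction with
  | base => exact hsq
  | succ n hn ih =>
    obtain ⟨k, rfl⟩ := Nat.exists_eq_add_of_le' hn
    calc b ^ (k + 2 + 1) = a ^ (k + 2) * b := by rw [pow_succ, ih]
      _ = a ^ (k + 1) * (a * b) := by rw [← mul_assoc, ← pow_succ]
      _ = a ^ (k + 2 + 1) := by rw [hmul, ← pow_add]

theorem pow_le_pow_succ_colon {R : Type*} [CommSemiring R] (I : Ideal R) (n : ℕ) :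
    I ^ n ≤ (I ^ (n + 1)).colon I := fun f hf ↦
  Submodule.mem_colon.2 fun g hg ↦ by
    simpa only [pow_succ, smul_eq_mul] using Ideal.mul_mem_mul hf hg

section MonomialIdeal

variable {σ : Type*} (R : Type*) [CommSemiring R]

/-- The ideal of `R[X_i : i ∈ σ]` generated by the monomials whose exponent vectors lie in `S`. -/
noncomputable def monomialIdeal (S : Set (σ →₀ ℕ)) : Ideal (MvPolynomial σ R) :=
  Ideal.span ((fun m ↦ monomial m 1) '' S)

variable {R} {S T U : Set (σ →₀ ℕ)}

theorem mem_monomialIdeal_iff {f : MvPolynomial σ R} :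
    f ∈ monomialIdeal R S ↔ ∀ m ∈ f.support, m ∈ upperClosure S :=
  mem_ideal_span_monomial_image

theorem monomial_mem_monomialIdeal_iff [Nontrivial R] {m : σ →₀ ℕ} :
    monomial m (1 : R) ∈ monomialIdeal R S ↔ m ∈ upperClosure S := by
  classical
  simp [mem_monomialIdeal_iff, support_monomial]

theorem monomialIdeal_le_monomialIdeal_iff [Nontrivial R] :
    monomialIdeal R S ≤ monomialIdeal R T ↔ ∀ m ∈ S, m ∈ upperClosure T := by
  simp only [← monomial_mem_monomialIdeal_iff (R := R)]
  rw [monomialIdeal, Ideal.span_le, Set.image_subset_iff]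
  rfl

variable (R) in
theorem monomialIdeal_mul (S T : Set (σ →₀ ℕ)) :
    monomialIdeal R S * monomialIdeal R T = monomialIdeal R (S + T) := by
  simp only [monomialIdeal, Ideal.span_mul_span']
  congr 1
  exact (Set.image_image2_distrib fun m m' ↦ by simp [monomial_mul]).symm

variable (R) in
theorem monomialIdeal_pow (S : Set (σ →₀ ℕ)) (n : ℕ) :
    monomialIdeal R S ^ n = monomialIdeal R (n • S) := by
  induction n with
  | zero => simp [monomialIdeal, Ideal.one_eq_top]
  | succ n ih => rw [pow_succ, ih, monomialIdeal_mul, succ_nsmul]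

theorem mem_colon_monomialIdeal_iff {f : MvPolynomial σ R} :
    f ∈ (monomialIdeal R S).colon (monomialIdeal R T) ↔
      ∀ m ∈ f.support, ∀ t ∈ T, m + t ∈ upperClosure S := by
  have mul_monomial_mem_iff (t : σ →₀ ℕ) : f * monomial t 1 ∈ monomialIdeal R S ↔
      ∀ m ∈ f.support, m + t ∈ upperClosure S := by
    have support_eq : (f * monomial t 1).support = f.support.map (addRightEmbedding t) :=
      AddMonoidAlgebra.support_coeff_mul_single f _ (by simp) t
    simp only [mem_monomialIdeal_iff, support_eq, Finset.forall_mem_map, addRightEmbedding_apply]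
  nth_rw 2 [monomialIdeal]
  rw [Ideal.colon_span, Submodule.mem_colon, Set.forall_mem_image]
  simp only [smul_eq_mul, mul_monomial_mem_iff]
  exact forall₂_comm

theorem colon_monomialIdeal_le_iff [Nontrivial R] :
    (monomialIdeal R S).colon (monomialIdeal R T) ≤ monomialIdeal R U ↔
      ∀ m, (∀ t ∈ T, m + t ∈ upperClosure S) → m ∈ upperClosure U := by
  classical
  constructor
  · intro h m hm
    rw [← monomial_mem_monomialIdeal_iff (R := R)]
    exact h (mem_colon_monomialIdeal_iff.2 (by simpa [support_monomial] using hm))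
  · intro h f hf
    rw [mem_monomialIdeal_iff]
    exact fun m hm ↦ h m (mem_colon_monomialIdeal_iff.1 hf m hm)

end MonomialIdeal

section Bivariate

/-- The exponent vector of `x ^ i * y ^ j`, where `x = X 0` and `y = X 1`, as a function of
`(i, j)`. Pairs, unlike finitely supported functions, can be compared and added by evaluation. -/
noncomputable def bivariateExponent : ℕ × ℕ →+ (Fin 2 →₀ ℕ) :=
  (Finsupp.singleAddHom 0).coprod (Finsupp.singleAddHom 1)

theorem monomial_bivariateExponent (R : Type*) [CommSemiring R] (p : ℕ × ℕ) :
    monomial (bivariateExponent p) (1 : R) = X 0 ^ p.1 * X 1 ^ p.2 := by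
  simp [bivariateExponent, X_pow_eq_monomial, monomial_mul]

theorem bivariateExponent_le_iff {p q : ℕ × ℕ} :
    bivariateExponent p ≤ bivariateExponent q ↔ p ≤ q := by
  simp [Finsupp.le_def, Fin.forall_fin_two, bivariateExponent, Prod.le_def]

theorem bivariateExponent_surjective : Function.Surjective bivariateExponent := fun m ↦
  ⟨(m 0, m 1), by ext i; fin_cases i <;> simp [bivariateExponent]⟩

/-- The ideal of `R[x, y]` generated by the monomials `x ^ i * y ^ j` with `(i, j) ∈ S`. -/
noncomputable def bivariateMonomialIdeal (R : Type*) [CommSemiring R] (S : Finset (ℕ × ℕ)) :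
    Ideal (MvPolynomial (Fin 2) R) :=
  monomialIdeal R (bivariateExponent '' S)

variable {R : Type*} [CommSemiring R] {S T U : Finset (ℕ × ℕ)}

theorem bivariateMonomialIdeal_pow (S : Finset (ℕ × ℕ)) (n : ℕ) :
    bivariateMonomialIdeal R S ^ n = bivariateMonomialIdeal R (n • S) := by
  rw [bivariateMonomialIdeal, monomialIdeal_pow, bivariateMonomialIdeal, Finset.coe_nsmul,
    Set.image_nsmul]

variable [Nontrivial R]

theorem bivariateMonomialIdeal_le_iff :
    bivariateMonomialIdeal R S ≤ bivariateMonomialIdeal R T ↔ ∀ p ∈ S, ∃ q ∈ T, q ≤ p := by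
  simp only [bivariateMonomialIdeal, monomialIdeal_le_monomialIdeal_iff, mem_upperClosure,
    Set.forall_mem_image, Set.exists_mem_image, bivariateExponent_le_iff, Finset.mem_coe]

theorem colon_bivariateMonomialIdeal_le_iff :
    (bivariateMonomialIdeal R S).colon (bivariateMonomialIdeal R T) ≤
        bivariateMonomialIdeal R U ↔
      ∀ p : ℕ × ℕ, (∀ t ∈ T, ∃ s ∈ S, s ≤ p + t) → ∃ u ∈ U, u ≤ p := by
  simp only [bivariateMonomialIdeal, colon_monomialIdeal_le_iff, mem_upperClosure,
    bivariateExponent_surjective.forall, Set.forall_mem_image, Set.exists_mem_image, ← map_add,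
    bivariateExponent_le_iff, Finset.mem_coe]

end Bivariate

theorem exists_mem_antidiagonal_le_iff {d : ℕ} {p : ℕ × ℕ} :
    (∃ q ∈ antidiagonal d, q ≤ p) ↔ d ≤ p.1 + p.2 := by
  simp only [mem_antidiagonal]
  constructor
  · rintro ⟨q, rfl, hq⟩
    exact add_le_add hq.1 hq.2
  · intro h
    exact ⟨(min p.1 d, d - min p.1 d), by simp, min_le_left _ _, by simp only; omega⟩

/-- The exponents of the generators of `(x ^ 6, y ^ 6, x * y ^ 5, x ^ 5 * y, x ^ 4 * y ^ 4)`. -/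
def fluctuatingExponents : Finset (ℕ × ℕ) := {(6, 0), (0, 6), (1, 5), (5, 1), (4, 4)}

/-- The exponents of the generators of `J`, i.e. those of total degree `6` in
`fluctuatingExponents`. -/
def sexticExponents : Finset (ℕ × ℕ) := {(6, 0), (0, 6), (1, 5), (5, 1)}

theorem two_nsmul_sexticExponents : 2 • sexticExponents =
    {(0, 12), (1, 11), (2, 10), (5, 7), (6, 6), (7, 5), (10, 2), (11, 1), (12, 0)} := by
  decide +kernel

theorem antidiagonal_add_sexticExponents {d : ℕ} (hd : 5 ≤ d) :
    antidiagonal d + sexticExponents = antidiagonal (d + 6) := by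
  ext ⟨a, b⟩
  simp only [Finset.mem_add, sexticExponents, Finset.exists_mem_insert, Finset.mem_singleton,
    exists_eq_left, mem_antidiagonal, Prod.exists, Prod.mk_add_mk,
    Prod.mk.injEq]
  constructor
  · rintro ⟨i, j, hij, h⟩
    omega
  · intro hab
    rcases le_or_gt 6 a with ha | ha
    · exact ⟨a - 6, b, by omega⟩
    · exact ⟨a, b - 6, by omega⟩

theorem nsmul_sexticExponents {n : ℕ} (hn : 4 ≤ n) :
    n • sexticExponents = antidiagonal (6 * n) := by
  induction n, hn using Nat.le_induction with
  | base => decide +kernel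
  | succ n hn ih => rw [succ_nsmul, ih, antidiagonal_add_sexticExponents (by omega), mul_add_one]

section Fluctuation

variable (R : Type*)

/-- The ideal `I = (x ^ 6, y ^ 6, x * y ^ 5, x ^ 5 * y, x ^ 4 * y ^ 4)` of `R[x, y]`. -/
noncomputable def fluctuatingIdeal [CommSemiring R] : Ideal (MvPolynomial (Fin 2) R) :=
  bivariateMonomialIdeal R fluctuatingExponents

theorem fluctuatingIdeal_eq_span [CommSemiring R] : fluctuatingIdeal R =
    Ideal.span {X 0 ^ 6, X 1 ^ 6, X 0 * X 1 ^ 5, X 0 ^ 5 * X 1, X 0 ^ 4 * X 1 ^ 4} := by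
  simp only [fluctuatingIdeal, bivariateMonomialIdeal, monomialIdeal, fluctuatingExponents,
    Finset.coe_insert, Finset.coe_singleton, Set.image_insert_eq, Set.image_singleton,
    monomial_bivariateExponent, pow_zero, pow_one, one_mul, mul_one]

variable [CommSemiring R] [Nontrivial R]

theorem fluctuatingIdeal_pow_eq {n : ℕ} (hn : 2 ≤ n) :
    fluctuatingIdeal R ^ n = bivariateMonomialIdeal R (n • sexticExponents) := by
  have sextic_le : bivariateMonomialIdeal R sexticExponents ≤ fluctuatingIdeal R :=
    bivariateMonomialIdeal_le_iff.2 (by decide)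
  have sq_le : fluctuatingIdeal R ^ 2 ≤ bivariateMonomialIdeal R sexticExponents ^ 2 := by
    rw [fluctuatingIdeal, bivariateMonomialIdeal_pow, bivariateMonomialIdeal_pow,
      bivariateMonomialIdeal_le_iff]
    decide +kernel
  rw [← bivariateMonomialIdeal_pow]
  exact pow_eq_pow_of_sq_eq_sq sextic_le (sq_le.antisymm (Ideal.pow_right_mono sextic_le 2)) hn

theorem fluctuatingIdeal_sq_colon :
    (fluctuatingIdeal R ^ 2).colon (fluctuatingIdeal R) = fluctuatingIdeal R := by
  refine le_antisymm ?_ (by simpa using pow_le_pow_succ_colon (fluctuatingIdeal R) 1)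
  rw [fluctuatingIdeal_pow_eq R le_rfl, two_nsmul_sexticExponents, fluctuatingIdeal,
    colon_bivariateMonomialIdeal_le_iff]
  rintro ⟨a, b⟩ h
  have hx := h (6, 0) (by decide)
  have hy := h (0, 6) (by decide)
  simp only [fluctuatingExponents, Finset.exists_mem_insert, Finset.mem_singleton,
    exists_eq_left, Prod.mk_add_mk, Prod.mk_le_mk] at hx hy ⊢
  omega

theorem fluctuatingIdeal_cube_colon_ne :
    (fluctuatingIdeal R ^ 3).colon (fluctuatingIdeal R) ≠ fluctuatingIdeal R ^ 2 := by
  rw [fluctuatingIdeal_pow_eq R (by norm_num), fluctuatingIdeal_pow_eq R le_rfl]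
  have mem_colon : ∀ t ∈ fluctuatingExponents, ∃ s ∈ 3 • sexticExponents, s ≤ (4, 9) + t := by
    decide +kernel
  have not_mem : ¬∃ u ∈ 2 • sexticExponents, u ≤ (4, 9) := by decide +kernel
  exact fun h ↦ not_mem (colon_bivariateMonomialIdeal_le_iff.1 h.le (4, 9) mem_colon)

theorem fluctuatingIdeal_pow_four_colon_ne :
    (fluctuatingIdeal R ^ 4).colon (fluctuatingIdeal R) ≠ fluctuatingIdeal R ^ 3 := by
  rw [fluctuatingIdeal_pow_eq R (by norm_num), fluctuatingIdeal_pow_eq R (by norm_num)]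
  have mem_colon : ∀ t ∈ fluctuatingExponents, ∃ s ∈ 4 • sexticExponents, s ≤ (9, 9) + t := by
    decide +kernel
  have not_mem : ¬∃ u ∈ 3 • sexticExponents, u ≤ (9, 9) := by decide +kernel
  exact fun h ↦ not_mem (colon_bivariateMonomialIdeal_le_iff.1 h.le (9, 9) mem_colon)

theorem fluctuatingIdeal_pow_succ_colon {n : ℕ} (hn : 4 ≤ n) :
    (fluctuatingIdeal R ^ (n + 1)).colon (fluctuatingIdeal R) = fluctuatingIdeal R ^ n := by
  refine le_antisymm ?_ (pow_le_pow_succ_colon _ n)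
  rw [fluctuatingIdeal_pow_eq R (by omega), fluctuatingIdeal_pow_eq R (by omega),
    nsmul_sexticExponents (by omega), nsmul_sexticExponents hn, fluctuatingIdeal,
    colon_bivariateMonomialIdeal_le_iff]
  simp only [exists_mem_antidiagonal_le_iff]
  intro p h
  have hx : 6 * (n + 1) ≤ p.1 + 6 + p.2 := h (6, 0) (by decide)
  omega

end Fluctuation

theorem stmt_19_general {R : Type*} [CommRing R] [Nontrivial R] (I : Ideal (MvPolynomial (Fin 2) R))
    (hI : I = Ideal.span {X 0 ^ 6, X 1 ^ 6, X 0 * X 1 ^ 5, X 0 ^ 5 * X 1, X 0 ^ 4 * X 1 ^ 4}) :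
    (I ^ 2).colon I = I ∧ (I ^ 3).colon I ≠ I ^ 2 ∧ (I ^ 4).colon I ≠ I ^ 3 ∧
      (I ^ 5).colon I = I ^ 4 ∧ HasFluctuationInColonPowers I := by
  obtain rfl : I = fluctuatingIdeal R := hI.trans (fluctuatingIdeal_eq_span R).symm
  have h2 := fluctuatingIdeal_sq_colon R
  have h3 := fluctuatingIdeal_cube_colon_ne R
  have h4 := fluctuatingIdeal_pow_four_colon_ne R
  have h5 := fluctuatingIdeal_pow_succ_colon R le_rfl
  refine ⟨h2, h3, h4, h5, 2, 3, 5, by norm_num, by norm_num, by norm_num, Or.inl ⟨?_, h3, h5⟩⟩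
  simpa using h2

theorem stmt_19 {K : Type*} [Field K] (I : Ideal (MvPolynomial (Fin 2) K))
    (hI : I = Ideal.span {X 0 ^ 6, X 1 ^ 6, X 0 * X 1 ^ 5, X 0 ^ 5 * X 1, X 0 ^ 4 * X 1 ^ 4}) :
    (I ^ 2).colon I = I ∧ (I ^ 3).colon I ≠ I ^ 2 ∧ (I ^ 4).colon I ≠ I ^ 3 ∧
      (I ^ 5).colon I = I ^ 4 ∧ HasFluctuationInColonPowers I :=
  stmt_19_general I hI
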